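/- For 0 < r < n, the normalized (n-1)-dimensional volume of the matroid base polytope of the minimal matroid T_{r,n} equals C(n-2, r-1). -/

import Mathlib

open MeasureTheory

noncomputable def wgt (k : ℕ) (t : ℝ) : ENNReal :=
  if 0 ≤ t then ENNReal.ofReal (t ^ k / (k.factorial : ℝ)) else 0

lemma wgt_meas (k : ℕ) : Measurable (wgt k) := by
  unfold wgt
  refine Measurable.ite (measurableSet_le measurable_const measurable_id) ?_ measurable_const
  fun_prop

lemma wgt_inner (k : ℕ) (b : ℝ) :
    ∫⁻ t, (if t ≤ b then wgt k t else 0) = wgt (k + 1) b := by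
  by_cases hb : 0 ≤ b
  · have h1 : (fun t => if t ≤ b then wgt k t else 0) =
        (Set.Icc 0 b).indicator (fun t => ENNReal.ofReal (t ^ k / (k.factorial : ℝ))) := by
      funext t
      by_cases h1 : t ≤ b <;> by_cases h2 : 0 ≤ t <;> simp [Set.indicator, wgt, h1, h2]
    rw [h1, lintegral_indicator measurableSet_Icc,
      ← ofReal_integral_eq_lintegral_ofReal]
    · rw [integral_Icc_eq_integral_Ioc, ← intervalIntegral.integral_of_le hb]
      simp only [wgt, hb, if_true, intervalIntegral.integral_div, integral_pow]
      congr 1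
      rw [Nat.factorial_succ]
      have : (k.factorial : ℝ) ≠ 0 := by positivity
      push_cast
      field_simp
      simp
    · apply ContinuousOn.integrableOn_Icc
      fun_prop
    · filter_upwards [ae_restrict_mem measurableSet_Icc] with t ht
      have := ht.1
      simp only [Pi.zero_apply]
      positivity
  · have h1 : (fun t => if t ≤ b then wgt k t else 0) = fun _ => 0 := by
      funext t
      by_cases h1 : t ≤ b
      · simp [wgt, h1, not_le.2 (h1.trans_lt (not_le.1 hb))]
      · simp [h1]
    rw [h1]
    simp [wgt, hb]

lemma wgt_conv (k : ℕ) (g : ℝ → ENNReal) (hg : Measurable g) :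
    ∫⁻ a, (if 0 ≤ a then ∫⁻ t, g (a + t) * wgt k t else 0) = ∫⁻ b, g b * wgt (k + 1) b := by
  have hw := wgt_meas k
  calc ∫⁻ a, (if 0 ≤ a then ∫⁻ t, g (a + t) * wgt k t else 0)
      = ∫⁻ a, ∫⁻ t, (if 0 ≤ a then g (a + t) * wgt k t else 0) := by
        congr 1; funext a; split_ifs <;> simp
    _ = ∫⁻ t, ∫⁻ a, (if 0 ≤ a then g (a + t) * wgt k t else 0) := by
        apply lintegral_lintegral_swap
        apply Measurable.aemeasurable
        apply Measurable.ite (measurableSet_le measurable_const measurable_fst)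
        · fun_prop
        · fun_prop
    _ = ∫⁻ t, ∫⁻ b, (if t ≤ b then g b * wgt k t else 0) := by
        congr 1; funext t
        rw [← lintegral_add_right_eq_self (fun b => if t ≤ b then g b * wgt k t else 0) t]
        simp
    _ = ∫⁻ b, ∫⁻ t, (if t ≤ b then g b * wgt k t else 0) := by
        apply lintegral_lintegral_swap
        apply Measurable.aemeasurable
        apply Measurable.ite (measurableSet_le measurable_fst measurable_snd)
        · fun_prop
        · fun_prop
    _ = ∫⁻ b, g b * wgt (k + 1) b := by
        congr 1; funext b
        rw [← wgt_inner, ← lintegral_const_mul]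
        · congr 1; funext t; split_ifs <;> simp
        · exact Measurable.ite (measurableSet_le measurable_id measurable_const) hw
            measurable_const

lemma meas_orth (n : ℕ) : MeasurableSet {u : Fin n → ℝ | ∀ i, 0 ≤ u i} := by
  rw [Set.ofPred_forall]
  exact MeasurableSet.iInter fun i => measurableSet_le measurable_const (measurable_pi_apply i)

lemma wgt_orth (k : ℕ) : ∀ (g : ℝ → ENNReal), Measurable g →
    ∫⁻ u : Fin (k + 1) → ℝ, (if ∀ i, 0 ≤ u i then g (∑ i, u i) else 0) = ∫⁻ t, g t * wgt k t := by
  induction k with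
  | zero =>
    intro g hg
    change ∫⁻ u : Fin 1 → ℝ, (if ∀ i, 0 ≤ u i then g (∑ i, u i) else 0) = _
    have h := (volume_preserving_funUnique (Fin 1) ℝ).lintegral_comp_emb
      (MeasurableEquiv.measurableEmbedding _) (fun t => g t * wgt 0 t)
    rw [← h]
    have e : ∀ u : Fin 1 → ℝ, (if ∀ i, 0 ≤ u i then g (∑ i, u i) else 0) =
        g (MeasurableEquiv.funUnique (Fin 1) ℝ u) * wgt 0 (MeasurableEquiv.funUnique (Fin 1) ℝ u) := by
      intro u
      by_cases ht : 0 ≤ u 0 <;> simp [wgt, ht, MeasurableEquiv.funUnique]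
    rw [lintegral_congr e]
    congr!
  | succ k ih =>
    intro g hg
    rw [← (volume_preserving_piFinSuccAbove (fun _ : Fin (k + 1 + 1) => ℝ) 0).symm.lintegral_comp_emb
      (MeasurableEquiv.measurableEmbedding _), ← wgt_conv k g hg]
    rw [Measure.volume_eq_prod, lintegral_prod]
    · congr 1; funext a
      by_cases ha : 0 ≤ a
      · rw [if_pos ha, ← ih (fun t => g (a + t)) (by fun_prop)]
        congr 1; funext u
        simp [MeasurableEquiv.piFinSuccAbove, Fin.insertNthEquiv, Fin.forall_fin_succ, ha, Fin.sum_univ_succ]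
      · rw [if_neg ha]
        simp [MeasurableEquiv.piFinSuccAbove, Fin.insertNthEquiv, Fin.forall_fin_succ, ha]
    · apply Measurable.aemeasurable
      apply Measurable.comp (g := fun u : Fin (k + 1 + 1) → ℝ => (if ∀ i, 0 ≤ u i then g (∑ i, u i) else 0))
      · exact Measurable.ite (meas_orth _) (by fun_prop) measurable_const
      · exact MeasurableEquiv.measurable _

lemma vol_simplex (s : ℕ) (c : ℝ) (hc : 0 ≤ c) :
    volume {y : Fin s → ℝ | (∀ j, 0 ≤ y j) ∧ ∑ j, y j ≤ c} =
      ENNReal.ofReal (c ^ s / (s.factorial : ℝ)) := by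
  cases s with
  | zero =>
    have : {y : Fin 0 → ℝ | (∀ j, 0 ≤ y j) ∧ ∑ j, y j ≤ c} = Set.univ := by
      ext y; simp [hc]
    rw [this, volume_pi, Measure.pi_univ]
    simp
  | succ k =>
    have hm : MeasurableSet {y : Fin (k+1) → ℝ | (∀ j, 0 ≤ y j) ∧ ∑ j, y j ≤ c} :=
      (meas_orth _).inter (measurableSet_le
        (f := fun y : Fin (k + 1) → ℝ => ∑ j, y j) (by fun_prop) measurable_const)
    have := wgt_orth k (fun t => if t ≤ c then 1 else 0)
      (Measurable.ite (measurableSet_le measurable_id measurable_const) measurable_const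
        measurable_const)
    rw [← lintegral_indicator_one hm]
    have h2 := wgt_inner k c
    simp only [wgt, hc, if_true] at h2
    rw [← h2]
    simp only [ite_mul, one_mul, zero_mul] at this
    simp only [wgt] at this
    rw [← this]
    congr 1; funext y
    by_cases h1 : ∀ j, 0 ≤ y j <;> by_cases h3 : ∑ j, y j ≤ c <;> simp [Set.indicator, h1, h3]

lemma append_mp (a s : ℕ) : MeasurePreserving
    (fun p : (Fin a → ℝ) × (Fin s → ℝ) => Fin.append (1 - p.1) p.2) volume volume := by
  have h1 := (volume_measurePreserving_piCongrLeft (fun _ : Fin (a + s) => ℝ)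
    (finSumFinEquiv : Fin a ⊕ Fin s ≃ Fin (a + s))).comp
    (volume_measurePreserving_sumPiEquivProdPi_symm (fun _ : Fin a ⊕ Fin s => ℝ))
  have h2 : MeasurePreserving (Prod.map (fun u : Fin a → ℝ => 1 - u) (id : (Fin s → ℝ) → _))
    volume volume :=
    (Measure.measurePreserving_sub_left (volume : Measure (Fin a → ℝ)) 1).prod (MeasurePreserving.id _)
  convert h1.comp h2 using 1
  funext p
  ext i
  refine Fin.addCases (fun i => ?_) (fun i => ?_) i
  · have := Equiv.piCongrLeft_apply_apply (fun _ : Fin (a + s) => ℝ) finSumFinEquiv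
      ((Equiv.sumPiEquivProdPi (fun _ : Fin a ⊕ Fin s => ℝ)).symm (1 - p.1, p.2)) (Sum.inl i)
    simp only [finSumFinEquiv_apply_left] at this
    rw [Fin.append_left]
    exact this.symm
  · have := Equiv.piCongrLeft_apply_apply (fun _ : Fin (a + s) => ℝ) finSumFinEquiv
      ((Equiv.sumPiEquivProdPi (fun _ : Fin a ⊕ Fin s => ℝ)).symm (1 - p.1, p.2)) (Sum.inr i)
    simp only [finSumFinEquiv_apply_right] at this
    rw [Fin.append_right]
    exact this.symm

def region (a s : ℕ) : Set (Fin (a + s) → ℝ) :=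
  {z | (∀ i : Fin a, z (Fin.castAdd s i) ≤ 1) ∧ (∀ j : Fin s, 0 ≤ z (Fin.natAdd a j)) ∧
    ∑ i : Fin a, (1 - z (Fin.castAdd s i)) ≤ 1 ∧
    ∑ j : Fin s, z (Fin.natAdd a j) ≤ ∑ i : Fin a, (1 - z (Fin.castAdd s i))}

lemma region_meas (a s : ℕ) : MeasurableSet (region a s) := by
  unfold region
  refine MeasurableSet.inter ?_ (MeasurableSet.inter ?_ (MeasurableSet.inter ?_ ?_))
  · change MeasurableSet {z : Fin (a + s) → ℝ | ∀ i : Fin a, z (Fin.castAdd s i) ≤ 1}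
    rw [Set.ofPred_forall]
    exact MeasurableSet.iInter fun i => measurableSet_le (by fun_prop) (by fun_prop)
  · change MeasurableSet {z : Fin (a + s) → ℝ | ∀ i : Fin s, 0 ≤ z (Fin.natAdd a i)}
    rw [Set.ofPred_forall]
    exact MeasurableSet.iInter fun i => measurableSet_le (by fun_prop) (by fun_prop)
  · exact measurableSet_le (f := fun z : Fin (a + s) → ℝ => ∑ i : Fin a, (1 - z (Fin.castAdd s i)))
      (by fun_prop) (by fun_prop)
  · exact measurableSet_le (f := fun z : Fin (a + s) → ℝ => ∑ j : Fin s, z (Fin.natAdd a j))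
      (g := fun z : Fin (a + s) → ℝ => ∑ i : Fin a, (1 - z (Fin.castAdd s i)))
      (by fun_prop) (by fun_prop)

lemma region_vol (k s : ℕ) : volume (region (k + 1) s) =
    ENNReal.ofReal (1 / ((k.factorial : ℝ) * (s.factorial : ℝ) * (k + s + 1))) := by
  have hm := region_meas (k + 1) s
  have mp := append_mp (k + 1) s
  rw [← mp.measure_preimage hm.nullMeasurableSet, Measure.volume_eq_prod,
    Measure.prod_apply (mp.measurable hm)]
  have key := wgt_orth k (fun t => if t ≤ 1 then ENNReal.ofReal (t ^ s / s.factorial) else 0)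
    (Measurable.ite (measurableSet_le measurable_id measurable_const) (by fun_prop)
      measurable_const)
  have e1 : ∀ u : Fin (k + 1) → ℝ,
      volume (Prod.mk u ⁻¹' ((fun p : (Fin (k+1) → ℝ) × (Fin s → ℝ) => Fin.append (1 - p.1) p.2) ⁻¹' region (k + 1) s))
      = if ∀ i, 0 ≤ u i then (if ∑ i, u i ≤ 1 then ENNReal.ofReal ((∑ i, u i) ^ s / s.factorial) else 0) else 0 := by
    intro u
    split_ifs with h1 h2
    · rw [← vol_simplex s _ (Finset.sum_nonneg fun i _ => h1 i)]
      congr 1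
      ext y
      simp [region, -Finset.sum_sub_distrib, h1, h2]
    · convert measure_empty (μ := (volume : Measure (Fin s → ℝ)))
      ext y
      simp [region, -Finset.sum_sub_distrib, h1, h2]
    · convert measure_empty (μ := (volume : Measure (Fin s → ℝ)))
      ext y
      simp [region, -Finset.sum_sub_distrib, h1]
  rw [lintegral_congr e1]
  refine Eq.trans ?_ (key.trans ?_)
  · rfl
  have e2 : ∀ t : ℝ, (if t ≤ 1 then ENNReal.ofReal (t ^ s / s.factorial) else 0) * wgt k t =
      ENNReal.ofReal ((k + s).factorial / ((k.factorial : ℝ) * s.factorial)) *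
        (if t ≤ 1 then wgt (k + s) t else 0) := by
    intro t
    split_ifs with h
    · unfold wgt
      split_ifs with h0
      · rw [← ENNReal.ofReal_mul (by positivity), ← ENNReal.ofReal_mul (by positivity)]
        congr 1
        have : ((k + s).factorial : ℝ) ≠ 0 := by positivity
        field_simp
        ring
      · simp
    · simp
  have e3 : Measurable (fun t : ℝ => if t ≤ 1 then wgt (k + s) t else 0) :=
    Measurable.ite (measurableSet_le measurable_id measurable_const) (wgt_meas _) measurable_const
  rw [lintegral_congr e2, lintegral_const_mul _ e3, wgt_inner]
  simp only [wgt, zero_le_one, if_true]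
  rw [← ENNReal.ofReal_mul (by positivity)]
  congr 1
  rw [Nat.factorial_succ]
  have : ((k + s).factorial : ℝ) ≠ 0 := by positivity
  push_cast
  field_simp
  simp

def verts (a s : ℕ) : Set (Fin (a + s) → ℝ) :=
  (fun B : Finset ℕ => fun i : Fin (a + s) => if i.val + 1 ∈ B then (1 : ℝ) else 0) ''
          {B : Finset ℕ | B ⊆ Finset.Icc 1 (a + s + 1) ∧ B.card = a ∧
            (B ∩ Finset.Ioc a (a + s + 1)).card ≤ 1}

lemma region_convex (a s : ℕ) : Convex ℝ (region a s) := by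
  intro x hx y hy p q hp hq hpq
  obtain ⟨x1, x2, x3, x4⟩ := hx
  obtain ⟨y1, y2, y3, y4⟩ := hy
  have hs : ∑ i : Fin a, (1 - (p • x + q • y) (Fin.castAdd s i)) =
      p * ∑ i : Fin a, (1 - x (Fin.castAdd s i)) + q * ∑ i : Fin a, (1 - y (Fin.castAdd s i)) := by
    rw [Finset.mul_sum, Finset.mul_sum, ← Finset.sum_add_distrib]
    refine Finset.sum_congr rfl fun i _ => ?_
    simp only [Pi.add_apply, Pi.smul_apply, smul_eq_mul]
    linear_combination -hpq
  have ht : ∑ j : Fin s, (p • x + q • y) (Fin.natAdd a j) =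
      p * ∑ j : Fin s, x (Fin.natAdd a j) + q * ∑ j : Fin s, y (Fin.natAdd a j) := by
    rw [Finset.mul_sum, Finset.mul_sum, ← Finset.sum_add_distrib]
    rfl
  refine ⟨fun i => ?_, fun j => ?_, ?_, ?_⟩
  · simp only [Pi.add_apply, Pi.smul_apply, smul_eq_mul]
    nlinarith [x1 i, y1 i]
  · simp only [Pi.add_apply, Pi.smul_apply, smul_eq_mul]
    nlinarith [mul_nonneg hp (x2 j), mul_nonneg hq (y2 j)]
  · rw [hs]; nlinarith
  · rw [hs, ht]; nlinarith

lemma verts_sub (a s : ℕ) : verts a s ⊆ region a s := by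
  rintro _ ⟨B, ⟨hB, hc, h1⟩, rfl⟩
  have e1 : ∑ i : Fin a, (if i.val + 1 ∈ B then (1 : ℝ) else 0) = ((B ∩ Finset.Icc 1 a).card : ℝ) := by
    rw [Fin.sum_univ_eq_sum_range (fun i => if i + 1 ∈ B then (1 : ℝ) else 0) a,
      Finset.sum_boole]
    congr 1
    apply Finset.card_bij (fun i _ => i + 1)
    · intro i hi
      simp only [Finset.mem_filter, Finset.mem_range, Finset.mem_inter, Finset.mem_Icc] at hi ⊢
      exact ⟨hi.2, by omega, by omega⟩
    · intro i _ j _ h; omega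
    · intro b hb
      simp at hb
      exact ⟨b - 1, by simp; rw [Nat.sub_add_cancel hb.2.1]; exact ⟨by omega, hb.1⟩, by omega⟩
  have e2 : ∑ j : Fin s, (if a + j.val + 1 ∈ B then (1 : ℝ) else 0) =
      ((B ∩ Finset.Ioc a (a + s)).card : ℝ) := by
    rw [Fin.sum_univ_eq_sum_range (fun j => if a + j + 1 ∈ B then (1 : ℝ) else 0) s,
      Finset.sum_boole]
    congr 1
    apply Finset.card_bij (fun i _ => a + i + 1)
    · intro i hi
      simp only [Finset.mem_filter, Finset.mem_range, Finset.mem_inter, Finset.mem_Ioc] at hi ⊢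
      exact ⟨hi.2, by omega, by omega⟩
    · intro i _ j _ h; omega
    · intro b hb
      simp at hb
      refine ⟨b - 1 - a, ?_, by omega⟩
      have : a + (b - 1 - a) + 1 = b := by omega
      simp [this, hb.1]; omega
  have hsplit : (B ∩ Finset.Icc 1 a).card + (B ∩ Finset.Ioc a (a + s + 1)).card = a := by
    rw [← Finset.card_union_of_disjoint, ← Finset.inter_union_distrib_left]
    · rw [Finset.inter_eq_left.2, hc]
      intro b hb
      have := hB hb
      simp at this ⊢; omega
    · rw [Finset.disjoint_left]
      intro b hb hb'
      simp at hb hb'; omega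
  have hle : (B ∩ Finset.Ioc a (a + s)).card ≤ (B ∩ Finset.Ioc a (a + s + 1)).card := by
    apply Finset.card_le_card
    apply Finset.inter_subset_inter_left
    exact Finset.Ioc_subset_Ioc_right (by omega)
  have hsR : ((B ∩ Finset.Icc 1 a).card : ℝ) + ((B ∩ Finset.Ioc a (a + s + 1)).card : ℝ) = a := by
    exact_mod_cast hsplit
  have hleR : ((B ∩ Finset.Ioc a (a + s)).card : ℝ) ≤ ((B ∩ Finset.Ioc a (a + s + 1)).card : ℝ) := by
    exact_mod_cast hle
  have h1R : ((B ∩ Finset.Ioc a (a + s + 1)).card : ℝ) ≤ 1 := by exact_mod_cast h1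
  refine ⟨fun i => ?_, fun j => ?_, ?_, ?_⟩
  · dsimp only; split_ifs <;> norm_num
  · dsimp only; split_ifs <;> norm_num
  · simp only [Fin.val_castAdd, Finset.sum_sub_distrib, e1]
    simp; linarith
  · simp only [Fin.val_castAdd, Fin.val_natAdd, Finset.sum_sub_distrib, e1, e2]
    simp; linarith

noncomputable def vtx0 (a s : ℕ) : Fin (a + s) → ℝ := Fin.append (fun _ => 1) (fun _ => 0)

noncomputable def vtx (a s : ℕ) (i : Fin a) (j : Fin (s + 1)) : Fin (a + s) → ℝ :=
  Fin.append (fun i' => if i' = i then 0 else 1) (fun j' => if j'.castSucc = j then 1 else 0)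

lemma vtx0_mem (a s : ℕ) : vtx0 a s ∈ verts a s := by
  refine ⟨Finset.Icc 1 a, ⟨?_, by simp, ?_⟩, ?_⟩
  · exact Finset.Icc_subset_Icc_right (by omega)
  · rw [Finset.disjoint_iff_inter_eq_empty.1]
    · simp
    · rw [Finset.disjoint_left]; intro b hb hb'; simp at hb hb'; omega
  · funext x
    refine Fin.addCases (fun i => ?_) (fun i => ?_) x
    · simp [vtx0]; 
    · simp [vtx0]

lemma vtx_mem (a s : ℕ) (i : Fin a) (j : Fin (s + 1)) : vtx a s i j ∈ verts a s := by
  refine ⟨insert (a + j.val + 1) ((Finset.Icc 1 a).erase (i.val + 1)), ⟨?_, ?_, ?_⟩, ?_⟩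
  · intro b hb
    simp at hb ⊢
    omega
  · rw [Finset.card_insert_of_notMem, Finset.card_erase_of_mem]
    · have := i.isLt
      simp only [Nat.card_Icc]; omega
    · simp only [Finset.mem_Icc]; omega
    · simp only [Finset.mem_erase, Finset.mem_Icc]; omega
  · calc _ ≤ ({a + j.val + 1} : Finset ℕ).card := by
          apply Finset.card_le_card
          intro b hb
          simp at hb ⊢
          omega
      _ = 1 := by simp
  · funext x
    refine Fin.addCases (fun i' => ?_) (fun j' => ?_) x
    · have h1 : i'.val ≠ a + j.val := by omega
      simp only [vtx, Fin.append_left, Fin.val_castAdd, Fin.ext_iff, Finset.mem_insert, Finset.mem_erase, Finset.mem_Icc]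
      by_cases h : i'.val = i.val
      · simp [h]; omega
      · rw [if_pos, if_neg h]; omega
    · simp only [vtx, Fin.append_right, Fin.val_natAdd, Fin.ext_iff, Finset.mem_insert, Finset.mem_erase, Finset.mem_Icc, Fin.val_castSucc]
      by_cases h : j'.val = j.val
      · simp [h]
      · rw [if_neg, if_neg h]; omega

lemma region_sub (a s : ℕ) : region a s ⊆ convexHull ℝ (verts a s) := by
  rintro z ⟨z1, z2, z3, z4⟩
  have hC : Convex ℝ (convexHull ℝ (verts a s)) := convex_convexHull ℝ _
  have hv0 := subset_convexHull ℝ _ (vtx0_mem a s)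
  have hv := fun i j => subset_convexHull ℝ _ (vtx_mem a s i j)
  set T := ∑ i : Fin a, (1 - z (Fin.castAdd s i)) with hT
  set u : Fin a → ℝ := fun i => 1 - z (Fin.castAdd s i) with hu
  have hu0 : ∀ i, 0 ≤ u i := fun i => sub_nonneg.2 (z1 i)
  set y : Fin (s + 1) → ℝ := Fin.snoc (fun j => z (Fin.natAdd a j))
    (T - ∑ j : Fin s, z (Fin.natAdd a j)) with hy
  have hyc : ∀ j : Fin s, y j.castSucc = z (Fin.natAdd a j) := fun j => by simp [hy]
  have hy0 : ∀ j, 0 ≤ y j := by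
    intro j
    refine Fin.lastCases ?_ (fun j => ?_) j
    · simp only [hy, Fin.snoc_last]; linarith
    · rw [hyc]; exact z2 j
  have hyT : ∑ j, y j = T := by
    rw [Fin.sum_univ_castSucc]
    simp [hy]
  have hT0 : 0 ≤ T := Finset.sum_nonneg fun i _ => hu0 i
  have huT : ∑ i, u i = T := rfl
  rcases hT0.eq_or_lt with h0 | hpos
  · have hu' : ∀ i, u i = 0 := by
      intro i
      exact (Finset.sum_eq_zero_iff_of_nonneg (fun i _ => hu0 i)).1 (huT.trans h0.symm) i (Finset.mem_univ i)
    have hy' : ∀ j, y j = 0 := by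
      intro i
      exact (Finset.sum_eq_zero_iff_of_nonneg (fun i _ => hy0 i)).1 (hyT.trans h0.symm) i (Finset.mem_univ i)
    convert hv0
    funext x
    refine Fin.addCases (fun i => ?_) (fun j => ?_) x
    · have := hu' i
      simp only [hu] at this
      simp only [vtx0, Fin.append_left]; linarith
    · simp only [vtx0, Fin.append_right]; rw [← hyc, hy']
  · have hp : ∑ q : Fin a × Fin (s + 1), ((u q.1 / T) * (y q.2 / T)) • vtx a s q.1 q.2 ∈
        convexHull ℝ (verts a s) := by
      apply hC.sum_mem
      · intro q _
        have := hu0 q.1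
        have := hy0 q.2
        positivity
      · rw [Fintype.sum_prod_type]
        simp only [← Finset.mul_sum, ← Finset.sum_div, hyT, div_self hpos.ne', mul_one, huT]
      · intro q _; exact hv _ _
    have hz := hC hv0 hp (a := 1 - T) (b := T) (by linarith) hT0 (by ring)
    convert hz using 1
    funext x
    simp only [Pi.add_apply, Pi.smul_apply, smul_eq_mul, Finset.sum_apply, Fintype.sum_prod_type]
    refine Fin.addCases (fun i => ?_) (fun j => ?_) x
    · simp only [vtx0, vtx, Fin.append_left, mul_assoc, ← Finset.mul_sum, ← Finset.sum_mul, ← Finset.sum_div, hyT,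
        div_self hpos.ne', one_mul]
      have : ∀ i', u i' / T * (if i = i' then (0:ℝ) else 1) = u i' / T - (if i = i' then u i' / T else 0) := by
        intro i'; split_ifs <;> simp
      simp only [this, Finset.sum_sub_distrib, ← Finset.sum_div, huT, Finset.sum_ite_eq, Finset.mem_univ, if_true]
      have : u i = 1 - z (Fin.castAdd s i) := rfl
      rw [this]
      field_simp
      ring
    · simp only [vtx0, vtx, Fin.append_right, mul_assoc, ← Finset.mul_sum, ← Finset.sum_mul, ← Finset.sum_div, huT,
        div_self hpos.ne', one_mul, mul_ite, mul_one, mul_zero, Finset.sum_ite_eq, Finset.mem_univ, if_true, hyc]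
      field_simp
      ring

lemma hull_eq (a s : ℕ) : convexHull ℝ (verts a s) = region a s :=
  Set.Subset.antisymm (convexHull_min (verts_sub a s) (region_convex a s)) (region_sub a s)

lemma main_aux (k s : ℕ) : ((k + 1 + s).factorial : ℝ) *
    (volume (convexHull ℝ (verts (k + 1) s))).toReal = (Nat.choose (k + s) k : ℝ) := by
  rw [hull_eq, region_vol, ENNReal.toReal_ofReal (by positivity), Nat.cast_add_choose,
    show k + 1 + s = (k + s) + 1 by ring, Nat.factorial_succ]
  push_cast
  field_simp

/-- For `0 < r < n`, the normalized `(n-1)`-dimensional volume of the matroid base polytope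
of the minimal matroid `T_{r,n}` equals `C(n-2, r-1)`.

The polytope `P(T_{r,n}) ⊆ ℝ^n` (the convex hull of the indicator vectors of the bases,
which are the `r`-subsets of `{1,…,n}` with at most one element in `{r+1,…,n}`) lies in the
hyperplane `x_1 + ⋯ + x_n = r`; forgetting the last coordinate is a lattice-preserving
(unimodular) affine isomorphism onto a full-dimensional polytope in `ℝ^{n-1}`, and the
normalized volume is `(n-1)!` times the Lebesgue volume of that image. -/
theorem normalized_volume_minimal_matroid_polytope (n r : ℕ) (hr : 0 < r) (hrn : r < n) :
    (Nat.factorial (n - 1) : ℝ) *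
      (volume (convexHull ℝ
        ((fun B : Finset ℕ => fun i : Fin (n - 1) => if i.val + 1 ∈ B then (1 : ℝ) else 0) ''
          {B : Finset ℕ | B ⊆ Finset.Icc 1 n ∧ B.card = r ∧
            (B ∩ Finset.Ioc r n).card ≤ 1}))).toReal =
      (Nat.choose (n - 2) (r - 1) : ℝ) := by
  obtain ⟨k, rfl⟩ : ∃ k, r = k + 1 := ⟨r - 1, by omega⟩
  obtain ⟨s, rfl⟩ : ∃ s, n = k + 1 + s + 1 := ⟨n - (k + 1) - 1, by omega⟩
  have h := main_aux k s
  have e : k + 1 + s + 1 - 2 = k + s := by omega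
  rw [e]
  exact h
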